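/- arXiv:1301.5799 — 2 statements merged into one kernel-verified Lean document; each statement's English description precedes it below -/
import Mathlib

section
/- Let K be a compact Hausdorff space, x ∈ K, and Γ an uncountable set. Let {g_k}_{k∈ℕ} and {f_γ}_{γ∈Γ} be families of Gδ points of K such that x belongs to the closure of {g_k : k∈ℕ} and to the closure of {f_γ : γ∈Γ}, and no sequence of points from {f_γ : γ∈Γ} converges to x. Then K does not have a retractional skeleton. -/
/-!
Let `D` be the union of the ranges of the retractions of a skeleton. The index set is σ-directed,
so `D` meets every nonempty Gδ set and contains the closure of each of its countable subsets.
Therefore all the points `g k` and `f γ`, and also `x`, lie in `D`, and it is enough to see that `D`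
is Fréchet–Urysohn at `x`.

The point is that `r t x ∈ closure (A ∩ range (r t))` for cofinally many `t` whenever `A ⊆ D` and
`x ∈ closure A`. As `range (r s)` is metrizable, countably many points of `A` have images under
`r s` converging to `r s x`, and these points are all fixed by some `r s'` with `s ≤ s'`. Iterate
`s ↦ s'` and let `t` be the supremum. The intermediate points `r (s n) x` belong to `r (s n) '' F`
for `F = closure (A ∩ range (r t))`, and countable compactness of `F` carries this over to `t`.
-/

open Filter Topology TopologicalSpace Set

universe u v

/-- A retractional skeleton in a topological space `K`: a family `r s : C(K, K)` of continuous
retractions indexed by an up-directed (nonempty) partially ordered set `Γ` such that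
(i) each `r s` has metrizable range and the net `(r s x)` converges to `x`;
(ii) `s ≤ t` implies `r s ∘ r t = r t ∘ r s = r s`;
(iii) each strictly increasing sequence has a supremum `t` and `r t x = lim_n r (f n) x`. -/
structure RetractionalSkeleton (K : Type u) [TopologicalSpace K] : Type (u + 1) where
  Γ : Type u
  [po : PartialOrder Γ]
  [ne : Nonempty Γ]
  directed : ∀ s t : Γ, ∃ w, s ≤ w ∧ t ≤ w
  r : Γ → C(K, K)
  isRetraction : ∀ s, ∀ x : K, r s (r s x) = r s x
  metrizable : ∀ s, MetrizableSpace ↥(Set.range (r s))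
  tendsto_id : ∀ x : K, Tendsto (fun s => r s x) atTop (𝓝 x)
  comp_eq_of_le : ∀ s t : Γ, s ≤ t → ∀ x : K, r s (r t x) = r s x ∧ r t (r s x) = r s x
  sup_seq : ∀ f : ℕ → Γ, StrictMono f → ∃ t : Γ, IsLUB (Set.range f) t ∧
    ∀ x : K, Tendsto (fun n => r (f n) x) atTop (𝓝 (r t x))

/-- The set `D(𝔰) = ⋃ s, r s [K]` induced by a retractional skeleton. -/
def RetractionalSkeleton.inducedSet {K : Type u} [TopologicalSpace K]
    (𝔰 : RetractionalSkeleton K) : Set K := ⋃ s, Set.range (𝔰.r s)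

/-- `D` is induced by an r-skeleton in `K`. -/
def IsInducedByRSkeleton {K : Type u} [TopologicalSpace K] (D : Set K) : Prop :=
  ∃ 𝔰 : RetractionalSkeleton K, 𝔰.inducedSet = D

/-- `K` has a retractional skeleton. -/
def HasRetractionalSkeleton (K : Type u) [TopologicalSpace K] : Prop :=
  Nonempty (RetractionalSkeleton K)
section Sequences

variable {X : Type*} [TopologicalSpace X]

lemma exists_seq_tendsto_of_frechetUrysohn_subtype {M B : Set X} [FrechetUrysohnSpace M]
    (hB : B ⊆ M) {x : X} (hxM : x ∈ M) (hx : x ∈ closure B) :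
    ∃ u : ℕ → X, (∀ n, u n ∈ B) ∧ Tendsto u atTop (𝓝 x) := by
  have hx' : (⟨x, hxM⟩ : M) ∈ closure ((↑) ⁻¹' B : Set M) := by
    rwa [closure_subtype, Subtype.image_preimage_coe, inter_eq_right.2 hB]
  obtain ⟨u, huB, hu⟩ := mem_closure_iff_seq_limit.1 hx'
  exact ⟨fun n => u n, huB, (continuous_subtype_val.tendsto _).comp hu⟩

lemma eq_of_mapClusterPt_of_tendsto [T2Space X] {ι : Type*} {l : Filter ι} {u : ι → X} {x y : X}
    (hx : MapClusterPt x l u) (hy : Tendsto u l (𝓝 y)) : x = y :=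
  eq_of_nhds_neBot (hx.clusterPt.mono hy)

lemma isSeqClosed_of_isCountablyCompact [T2Space X] {F : Set X} (hF : IsCountablyCompact F) :
    IsSeqClosed F := by
  intro u x huF hu
  obtain ⟨y, hyF, hy⟩ := hF.seq_clusterPt u (Eventually.of_forall huF)
  exact eq_of_mapClusterPt_of_tendsto hy hu ▸ hyF

end Sequences

namespace RetractionalSkeleton

attribute [local instance] po ne metrizable

variable {K : Type u} [TopologicalSpace K] (S : RetractionalSkeleton K)

instance isDirectedOrder : IsDirectedOrder S.Γ := ⟨S.directed⟩

lemma exists_subseq_isLUB_tendsto {s : ℕ → S.Γ} (hs : Monotone s) :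
    ∃ φ : ℕ → ℕ, StrictMono φ ∧ ∃ t, IsLUB (range s) t ∧
      ∀ p, Tendsto (fun n => S.r (s (φ n)) p) atTop (𝓝 (S.r t p)) := by
  obtain ⟨φ, hφ⟩ := exists_increasing_or_nonincreasing_subseq (· < ·) s
  have upperBounds_eq : upperBounds (range (s ∘ φ)) = upperBounds (range s) :=
    hs.upperBounds_range_comp_tendsto_atTop φ.strictMono.tendsto_atTop
  suffices ∃ t, IsLUB (range (s ∘ φ)) t ∧
      ∀ p, Tendsto (fun n => S.r (s (φ n)) p) atTop (𝓝 (S.r t p)) by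
    obtain ⟨t, ht, hlim⟩ := this
    exact ⟨φ, φ.strictMono, t, (isLUB_congr upperBounds_eq).1 ht, hlim⟩
  rcases hφ with increasing | nonincreasing
  · exact S.sup_seq (s ∘ φ) fun m n hmn => increasing m n hmn
  · have constant : ∀ n, s (φ n) = s (φ 0) := fun n => by
      rcases n.eq_zero_or_pos with rfl | hn
      · rfl
      · exact ((hs (φ.monotone n.zero_le)).eq_of_not_lt (nonincreasing 0 n hn)).symm
    refine ⟨s (φ 0), ?_, fun p => ?_⟩
    · rw [show s ∘ φ = fun _ => s (φ 0) from funext constant, range_const]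
      exact isLUB_singleton
    · simp only [constant, tendsto_const_nhds]

lemma exists_isLUB_tendsto_of_monotone {s : ℕ → S.Γ} (hs : Monotone s) :
    ∃ t, IsLUB (range s) t ∧ ∀ p, Tendsto (fun n => S.r (s n) p) atTop (𝓝 (S.r t p)) := by
  obtain ⟨-, -, t, ht, -⟩ := S.exists_subseq_isLUB_tendsto hs
  refine ⟨t, ht, fun p => tendsto_of_subseq_tendsto fun k hk => ?_⟩
  obtain ⟨ψ, -, hψ⟩ := strictMono_subseq_of_tendsto_atTop hk
  obtain ⟨φ, -, t', ht', hlim⟩ := S.exists_subseq_isLUB_tendsto (hs.comp hψ.monotone)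
  have upperBounds_eq : upperBounds (range (s ∘ k ∘ ψ)) = upperBounds (range s) :=
    hs.upperBounds_range_comp_tendsto_atTop hψ.tendsto_atTop
  obtain rfl : t' = t := ((isLUB_congr upperBounds_eq).1 ht').unique ht
  exact ⟨ψ ∘ φ, hlim p⟩

lemma bddAbove_of_countable {I : Set S.Γ} (hI : I.Countable) : BddAbove I := by
  rcases I.eq_empty_or_nonempty with rfl | hne
  · exact bddAbove_empty
  obtain ⟨u, rfl⟩ := hI.exists_eq_range hne
  choose ub le_ub_left le_ub_right using S.directed
  let s : ℕ → S.Γ := fun n => n.rec (u 0) fun k t => ub t (u k)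
  have hs : Monotone s := monotone_nat_of_le_succ fun n => le_ub_left (s n) (u n)
  obtain ⟨t, ht, -⟩ := S.exists_isLUB_tendsto_of_monotone hs
  refine ⟨t, forall_mem_range.2 fun n => ?_⟩
  exact (le_ub_right (s n) (u n)).trans (ht.1 (mem_range_self (n + 1)))

lemma mem_range_iff {s : S.Γ} {p : K} : p ∈ range (S.r s) ↔ S.r s p = p :=
  ⟨by rintro ⟨q, rfl⟩; exact S.isRetraction s q, fun hp => ⟨p, hp⟩⟩

lemma range_subset_range {s t : S.Γ} (hst : s ≤ t) : range (S.r s) ⊆ range (S.r t) := by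
  rintro _ ⟨p, rfl⟩
  exact ⟨S.r s p, (S.comp_eq_of_le s t hst p).2⟩

lemma isClosed_range [T2Space K] (s : S.Γ) : IsClosed (range (S.r s)) := by
  have range_eq : range (S.r s) = {p | S.r s p = p} := ext fun _ => S.mem_range_iff
  exact range_eq ▸ isClosed_eq (S.r s).continuous continuous_id

lemma inter_inducedSet_nonempty_of_isGδ {G : Set K} (hG : IsGδ G) (hne : G.Nonempty) :
    (G ∩ S.inducedSet).Nonempty := by
  obtain ⟨p, hp⟩ := hne
  obtain ⟨U, hU, rfl⟩ := isGδ_iff_eq_iInter_nat.1 hG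
  have eventually_mem : ∀ n, ∃ s, ∀ t, s ≤ t → S.r t p ∈ U n := fun n =>
    eventually_atTop.1 (S.tendsto_id p ((hU n).mem_nhds (mem_iInter.1 hp n)))
  choose s hs using eventually_mem
  obtain ⟨t, ht⟩ := S.bddAbove_of_countable (countable_range s)
  exact ⟨S.r t p, mem_iInter.2 fun n => hs n t (ht (mem_range_self n)),
    mem_iUnion.2 ⟨t, mem_range_self p⟩⟩

lemma mem_inducedSet_of_isGδ_singleton {p : K} (hp : IsGδ {p}) : p ∈ S.inducedSet :=
  singleton_inter_nonempty.1 (S.inter_inducedSet_nonempty_of_isGδ hp (singleton_nonempty p))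

lemma exists_ge_subset_range_of_countable {C : Set K} (hC : C.Countable)
    (hCD : C ⊆ S.inducedSet) (s : S.Γ) : ∃ t ≥ s, C ⊆ range (S.r t) := by
  have exists_mem_range : ∀ p ∈ C, ∃ i, p ∈ range (S.r i) := fun p hp => mem_iUnion.1 (hCD hp)
  choose! i hi using exists_mem_range
  obtain ⟨t, ht⟩ := S.bddAbove_of_countable ((hC.image i).insert s)
  refine ⟨t, ht (mem_insert s _), fun p hp => ?_⟩
  exact S.range_subset_range (ht (mem_insert_of_mem s (mem_image_of_mem i hp))) (hi p hp)

lemma closure_subset_inducedSet_of_countable [T2Space K] {C : Set K} (hC : C.Countable)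
    (hCD : C ⊆ S.inducedSet) : closure C ⊆ S.inducedSet := by
  obtain ⟨t, -, ht⟩ := S.exists_ge_subset_range_of_countable hC hCD (Classical.arbitrary S.Γ)
  exact (closure_minimal ht (S.isClosed_range t)).trans (subset_iUnion (fun s => range (S.r s)) t)

lemma apply_mem_image_of_tendsto [T2Space K] {s : ℕ → S.Γ} (hs : Monotone s) {t : S.Γ}
    (hlim : ∀ p, Tendsto (fun n => S.r (s n) p) atTop (𝓝 (S.r t p))) {F : Set K}
    (hF : IsCountablyCompact F) {x : K} (hx : ∀ n, S.r (s n) x ∈ S.r (s n) '' F) :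
    S.r t x ∈ S.r t '' F := by
  choose y hyF hy using hx
  obtain ⟨z, hzF, hz⟩ := hF.seq_clusterPt y (Eventually.of_forall hyF)
  have r_y_eq : ∀ m n, m ≤ n → S.r (s m) (y n) = S.r (s m) x := fun m n hmn =>
    calc S.r (s m) (y n) = S.r (s m) (S.r (s n) (y n)) :=
          (S.comp_eq_of_le _ _ (hs hmn) _).1.symm
      _ = S.r (s m) (S.r (s n) x) := by rw [hy]
      _ = S.r (s m) x := (S.comp_eq_of_le _ _ (hs hmn) _).1
  have r_z_eq : ∀ m, S.r (s m) z = S.r (s m) x := fun m =>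
    eq_of_mapClusterPt_of_tendsto (hz.continuousAt_comp (S.r (s m)).continuous.continuousAt)
      (tendsto_const_nhds.congr' <|
        (eventually_ge_atTop m).mono fun n hmn => (r_y_eq m n hmn).symm)
  exact ⟨z, hzF, tendsto_nhds_unique (hlim z) (by simpa only [r_z_eq] using hlim x)⟩

lemma exists_ge_tendsto_apply {A : Set K} (hA : A ⊆ S.inducedSet) {x : K} (hx : x ∈ closure A)
    (s : S.Γ) : ∃ t ≥ s, ∃ a : ℕ → K, (∀ k, a k ∈ A ∩ range (S.r t)) ∧
      Tendsto (fun k => S.r s (a k)) atTop (𝓝 (S.r s x)) := by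
  have hsx : S.r s x ∈ closure (S.r s '' A) :=
    image_closure_subset_closure_image (S.r s).continuous (mem_image_of_mem (S.r s) hx)
  obtain ⟨u, huA, hu⟩ := exists_seq_tendsto_of_frechetUrysohn_subtype
    (image_subset_range (S.r s) A) (mem_range_self x) hsx
  choose a haA hau using huA
  obtain ⟨t, hst, ht⟩ := S.exists_ge_subset_range_of_countable (countable_range a)
    ((range_subset_iff.2 haA).trans hA) s
  exact ⟨t, hst, a, fun k => ⟨haA k, ht (mem_range_self k)⟩, by simpa only [hau] using hu⟩

lemma exists_ge_apply_mem_closure [T2Space K] [CountablyCompactSpace K] {A : Set K}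
    (hA : A ⊆ S.inducedSet) {x : K} (hx : x ∈ closure A) (s₀ : S.Γ) :
    ∃ t ≥ s₀, S.r t x ∈ closure (A ∩ range (S.r t)) := by
  choose next le_next a ha hlim using S.exists_ge_tendsto_apply hA hx
  let s : ℕ → S.Γ := fun n => next^[n] s₀
  have s_succ (n : ℕ) : s (n + 1) = next (s n) := Function.iterate_succ_apply' next n s₀
  have hs : Monotone s := monotone_nat_of_le_succ fun n => s_succ n ▸ le_next (s n)
  obtain ⟨t, ht, htlim⟩ := S.exists_isLUB_tendsto_of_monotone hs
  have le_t (n : ℕ) : s n ≤ t := ht.1 (mem_range_self n)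
  set F := closure (A ∩ range (S.r t))
  have hF : IsCountablyCompact F := isClosed_closure.isCountablyCompact
  have a_mem (n k : ℕ) : a (s n) k ∈ F :=
    subset_closure (inter_subset_inter_right A (S.range_subset_range (s_succ n ▸ le_t (n + 1)))
      (ha (s n) k))
  have apply_mem_image (n : ℕ) : S.r (s n) x ∈ S.r (s n) '' F :=
    isSeqClosed_of_isCountablyCompact (hF.image (S.r (s n)).continuous)
      (fun k => mem_image_of_mem _ (a_mem n k)) (hlim (s n))
  obtain ⟨y, hyF, hyx⟩ := S.apply_mem_image_of_tendsto hs htlim hF apply_mem_image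
  have hy : S.r t y = y :=
    S.mem_range_iff.1 (closure_minimal inter_subset_right (S.isClosed_range t) hyF)
  exact ⟨t, le_t 0, hyx ▸ hy.symm ▸ hyF⟩

lemma exists_seq_tendsto_of_mem_closure [T2Space K] [CountablyCompactSpace K] {A : Set K}
    (hA : A ⊆ S.inducedSet) {x : K} (hxD : x ∈ S.inducedSet) (hxA : x ∈ closure A) :
    ∃ u : ℕ → K, (∀ n, u n ∈ A) ∧ Tendsto u atTop (𝓝 x) := by
  obtain ⟨s, hxs⟩ := mem_iUnion.1 hxD
  obtain ⟨t, hst, ht⟩ := S.exists_ge_apply_mem_closure hA hxA s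
  have hxt : x ∈ range (S.r t) := S.range_subset_range hst hxs
  rw [S.mem_range_iff.1 hxt] at ht
  obtain ⟨u, hu, hux⟩ := exists_seq_tendsto_of_frechetUrysohn_subtype inter_subset_right hxt ht
  exact ⟨u, fun n => (hu n).1, hux⟩

end RetractionalSkeleton

theorem not_hasRetractionalSkeleton_of_Gdelta_points_general {K : Type u} [TopologicalSpace K]
    [CountablyCompactSpace K] [T2Space K] {x : K} {G F : Set K} (hGc : G.Countable)
    (hG : ∀ p ∈ G, IsGδ {p}) (hF : ∀ p ∈ F, IsGδ {p}) (hxG : x ∈ closure G) (hxF : x ∈ closure F)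
    (hnoseq : ¬ ∃ u : ℕ → K, (∀ n, u n ∈ F) ∧ Tendsto u atTop (𝓝 x)) :
    ¬ HasRetractionalSkeleton K := by
  rintro ⟨S⟩
  have hGD : G ⊆ S.inducedSet := fun p hp => S.mem_inducedSet_of_isGδ_singleton (hG p hp)
  have hFD : F ⊆ S.inducedSet := fun p hp => S.mem_inducedSet_of_isGδ_singleton (hF p hp)
  have hxD : x ∈ S.inducedSet := S.closure_subset_inducedSet_of_countable hGc hGD hxG
  exact hnoseq (S.exists_seq_tendsto_of_mem_closure hFD hxD hxF)

/-- Let `K` be compact Hausdorff, `x ∈ K`, `Γ` uncountable, `{g k}` and `{f γ}` families of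
Gδ points of `K` with `x` in the closure of each family, such that no sequence of points
from `{f γ}` converges to `x`. Then `K` has no retractional skeleton. -/
theorem not_hasRetractionalSkeleton_of_Gdelta_points (K : Type u) [TopologicalSpace K]
    [CompactSpace K] [T2Space K] (x : K) (Γ : Type v) [Uncountable Γ]
    (g : ℕ → K) (f : Γ → K)
    (hg : ∀ k, IsGδ ({g k} : Set K)) (hf : ∀ γ, IsGδ ({f γ} : Set K))
    (hxg : x ∈ closure (Set.range g)) (hxf : x ∈ closure (Set.range f))
    (hnoseq : ¬ ∃ u : ℕ → K, (∀ n, u n ∈ Set.range f) ∧ Tendsto u atTop (𝓝 x)) :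
    ¬ HasRetractionalSkeleton K :=
  not_hasRetractionalSkeleton_of_Gdelta_points_general (countable_range g)
    (forall_mem_range.2 hg) (forall_mem_range.2 hf) hxg hxf hnoseq
end

section
/- Let K be a compact Hausdorff space. Then K is a Corson compact if and only if K itself is induced by an r-skeleton in K (i.e., there is a retractional skeleton {r_s}_{s∈Γ} in K with ⋃_{s∈Γ} r_s[K] = K). Moreover, if K is Corson compact and D is any set induced by an r-skeleton in K, then D = K. -/
/-!
A Corson compact space is a compact set of functions with countable support. Setting the coordinates
outside a countable set `B` to zero maps this compact set into itself for cofinally many `B`, and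
the resulting retractions form a skeleton whose ranges cover the whole space.

If a set induced by a skeleton is the whole space, then the space is countably tight: a closing-off
argument reduces the closure of a set to that of a countable subset. The set induced by any skeleton
is dense and contains the closures of its countable subsets, so in a countably tight space it is
everything.

To embed a countably tight compact space with a skeleton into a `Σ`-product, reindex the skeleton by
the finite sets `F` of indices, monotonically, and let `K_S` be the closure of the union of the
ranges with `F ⊆ S`. Tightness and compactness provide compatible retractions `R_S` onto the sets
`K_S`. By induction on the cardinality of `S` each `K_S` is separated by a point-countable family of
functions: enumerate an infinite `S` along its initial ordinal and use the differences
`f ∘ R_{≤ a} - f ∘ R_{< a}`, where `f` runs through the family obtained for the `a`-th initial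
segment. This family is point-countable because, again by tightness, `R_{≤ a} x ≠ R_{< a} x` holds
for only countably many `a`.
-/

open Filter Topology TopologicalSpace Set

universe u v

/-- `K` is a Corson compact space: it is homeomorphic to a compact subset of
`Σ(Γ) = {x ∈ ℝ^Γ : x γ ≠ 0 for at most countably many γ}` for some set `Γ`. -/
def IsCorsonCompact (K : Type u) [TopologicalSpace K] : Prop :=
  ∃ (Γ : Type u) (A : Set (Γ → ℝ)), IsCompact A ∧
    (∀ x ∈ A, {γ | x γ ≠ 0}.Countable) ∧ Nonempty (K ≃ₜ ↥A)

/-! ### Order and cardinality -/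

theorem exists_monotone_finset_map (α : Type*) [Preorder α] [Nonempty α] [IsDirectedOrder α] :
    ∃ g : Finset α → α, Monotone g ∧ ∀ a, a ≤ g {a} := by
  classical
  have exists_next (F : Finset α) (g : ∀ G ⊂ F, α) :
      ∃ b, (∀ a ∈ F, a ≤ b) ∧ ∀ (G : Finset α) (h : G ⊂ F), g G h ≤ b := by
    obtain ⟨b, hb⟩ := Finset.exists_le (F ∪ F.ssubsets.attach.image fun G : {G // G ∈ F.ssubsets} ↦
      g G.1 (Finset.mem_ssubsets.1 G.2))
    refine ⟨b, fun a ha ↦ hb a (Finset.mem_union_left _ ha), fun G h ↦ ?_⟩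
    exact hb _ (Finset.mem_union_right _ (Finset.mem_image.2
      ⟨⟨G, Finset.mem_ssubsets.2 h⟩, Finset.mem_attach _ _, rfl⟩))
  choose next le_next next_mono using exists_next
  refine ⟨Finset.strongInduction next, fun F G hFG ↦ ?_, fun a ↦ ?_⟩
  · rcases eq_or_ssubset_of_subset hFG with rfl | hss
    · exact le_rfl
    · rw [Finset.strongInduction_eq next G]
      exact next_mono G (fun F _ ↦ Finset.strongInduction next F) F hss
  · rw [Finset.strongInduction_eq next {a}]
    exact le_next _ _ a (Finset.mem_singleton_self a)

instance isDirectedOrder_finset_subset {α : Type*} (S : Set α) :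
    IsDirectedOrder {F : Finset α // (F : Set α) ⊆ S} := by
  classical
  refine ⟨fun F G ↦ ⟨⟨F.1 ∪ G.1, ?_⟩, Finset.subset_union_left, Finset.subset_union_right⟩⟩
  rw [Finset.coe_union]
  exact union_subset F.2 G.2

instance nonempty_finset_subset {α : Type*} (S : Set α) :
    Nonempty {F : Finset α // (F : Set α) ⊆ S} :=
  ⟨⟨∅, by simp⟩⟩

theorem exists_monotone_finset_seq {α : Type*} {C : Set α} (hC : C.Countable) :
    ∃ E : ℕ → Finset α, Monotone E ∧ (∀ n, (E n : Set α) ⊆ C) ∧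
      ∀ F : Finset α, (F : Set α) ⊆ C → ∃ n, F ⊆ E n := by
  have : {F : Finset α | (F : Set α) ⊆ C}.Countable :=
    ((countable_ofPred_finite_subset hC).preimage Finset.coe_injective).mono
      fun F hF ↦ show (F : Set α).Finite ∧ (F : Set α) ⊆ C from ⟨F.finite_toSet, hF⟩
  have : Countable {F : Finset α // (F : Set α) ⊆ C} := this.to_subtype
  obtain ⟨E, hE, hlim⟩ :=
    exists_seq_monotone_tendsto_atTop_atTop {F : Finset α // (F : Set α) ⊆ C}
  refine ⟨fun n ↦ (E n).1, fun m n hmn ↦ hE hmn, fun n ↦ (E n).2, fun F hF ↦ ?_⟩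
  exact (hlim.eventually_ge_atTop ⟨F, hF⟩).exists

theorem countable_of_isLowerSet_cofinal {W : Type*} [PartialOrder W] [WellFoundedLT W] {E : Set W}
    (h : ∀ I : Set W, IsLowerSet I → ∃ C ⊆ I, C.Countable ∧ ∀ b ∈ E ∩ I, ∃ c ∈ C, b ≤ c) :
    E.Countable := by
  have inter_countable (I : Set W) (hI : IsLowerSet I) (ih : ∀ c ∈ I, (E ∩ Iic c).Countable) :
      (E ∩ I).Countable := by
    obtain ⟨C, hCI, hC, hcof⟩ := h I hI
    refine (hC.biUnion fun c hc ↦ ih c (hCI hc)).mono fun b hb ↦ ?_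
    obtain ⟨c, hc, hbc⟩ := hcof b hb
    exact mem_biUnion hc ⟨hb.1, hbc⟩
  have inter_Iic_countable (a : W) : (E ∩ Iic a).Countable := by
    induction a using WellFoundedLT.induction with
    | ind a ih =>
      refine ((inter_countable (Iio a) (isLowerSet_Iio a) ih).insert a).mono ?_
      rintro b ⟨hbE, hba⟩
      exact (eq_or_lt_of_le hba).imp_right fun hlt ↦ ⟨hbE, hlt⟩
  simpa only [inter_univ] using
    inter_countable univ isLowerSet_univ fun c _ ↦ inter_Iic_countable c

/-- An infinite set is enumerated in the order type of its cardinal, so that proper initial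
segments have smaller cardinality. -/
theorem set_induction_wellOrder {α : Type v} {P : Set α → Prop} (finite : ∀ S, S.Finite → P S)
    (wellOrder : ∀ (W : Type v) [LinearOrder W] [WellFoundedLT W] (i : W → α),
      Function.Injective i → (∀ a, P (i '' Iic a)) → P (range i)) (S : Set α) : P S := by
  induction h : Cardinal.mk S using WellFoundedLT.induction generalizing S with
  | ind κ ih =>
    rcases S.finite_or_infinite with hS | hS
    · exact finite S hS
    let W := (Cardinal.mk S).ord.ToType
    have mk_W : Cardinal.mk W = Cardinal.mk S := Cardinal.mk_ord_toType _
    obtain ⟨e⟩ : Nonempty (W ≃ S) := Cardinal.eq.1 mk_W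
    have range_e : range (Subtype.val ∘ e) = S := by
      rw [range_comp, e.range_eq_univ, image_univ, Subtype.range_coe]
    rw [← range_e]
    refine wellOrder W _ (Subtype.val_injective.comp e.injective) fun a ↦ ih _ ?_ _ rfl
    have := hS.to_subtype
    calc Cardinal.mk (Subtype.val ∘ e '' Iic a)
        ≤ Cardinal.mk (Iic a) := Cardinal.mk_image_le
      _ < Cardinal.mk W := Cardinal.mk_Iic_lt a (by simp [W]) (mk_W ▸ Cardinal.aleph0_le_mk S)
      _ = κ := mk_W.trans h

/-! ### Topology -/

/-- A space is countably tight if every point of the closure of a set lies in the closure of a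
countable subset of it. -/
class CountablyTight (X : Type*) [TopologicalSpace X] : Prop where
  exists_countable_mem_closure : ∀ (A : Set X) (x : X), x ∈ closure A →
    ∃ C ⊆ A, C.Countable ∧ x ∈ closure C

theorem exists_countable_image_subset_closure {X Y : Type*} [TopologicalSpace Y] (f : X → Y)
    [SecondCountableTopology (range f)] (A : Set X) :
    ∃ C ⊆ A, C.Countable ∧ f '' A ⊆ closure (f '' C) := by
  have : SecondCountableTopology (f '' A) :=
    (IsEmbedding.inclusion (image_subset_range f A)).secondCountableTopology
  obtain ⟨D, hD, hDdense⟩ := exists_countable_dense (f '' A)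
  obtain ⟨C, hCA, hC⟩ :=
    SurjOn.exists_bijOn_subset (f := f) (s := A) (Subtype.coe_image_subset (f '' A) D)
  refine ⟨C, hCA, countable_of_injective_of_countable_image hC.injOn ?_, ?_⟩
  · rw [hC.image_eq]
    exact hD.image _
  · rw [hC.image_eq]
    exact Subtype.dense_iff.1 hDdense

theorem exists_mem_forall_eq_of_mem_closure_image {ι X : Type*} [Preorder ι] [IsDirectedOrder ι]
    [Nonempty ι] [TopologicalSpace X] {Y : ι → Type*} [∀ i, TopologicalSpace (Y i)]
    [∀ i, T2Space (Y i)] {f : ∀ i, X → Y i} (hf : ∀ i, Continuous (f i)) {S : Set X}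
    (hS : IsCompact S) {x : X}
    (hcompat : ∀ ⦃i j⦄, i ≤ j → ∀ z, f j z = f j x → f i z = f i x)
    (hx : ∀ i, f i x ∈ closure (f i '' S)) : ∃ z ∈ S, ∀ i, f i z = f i x := by
  let fiber (i : ι) : Set X := {z | f i z = f i x}
  have fiber_closed (i : ι) : IsClosed (fiber i) := isClosed_eq (hf i) continuous_const
  have fiber_meets (i : ι) : (S ∩ fiber i).Nonempty := by
    have mem_image := hx i
    rwa [(hS.image (hf i)).isClosed.closure_eq] at mem_image
  have fiber_anti : Antitone fiber := fun i j hij z hz ↦ hcompat hij z hz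
  suffices (S ∩ ⋂ i, fiber i).Nonempty by
    obtain ⟨z, hzS, hz⟩ := this
    exact ⟨z, hzS, mem_iInter.1 hz⟩
  by_contra hempty
  obtain ⟨i, hi⟩ := hS.elim_directed_family_closed fiber fiber_closed
    (not_nonempty_iff_eq_empty.1 hempty) fiber_anti.directed_ge
  exact (fiber_meets i).ne_empty hi

theorem continuous_of_isClosed_graph {X Y : Type*} [TopologicalSpace X] [TopologicalSpace Y]
    [CompactSpace Y] {f : X → Y} (hf : IsClosed {p : X × Y | f p.1 = p.2}) : Continuous f := by
  refine continuous_iff_isClosed.2 fun Z hZ ↦ ?_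
  convert isClosedMap_fst_of_compactSpace _ (hf.inter (hZ.preimage continuous_snd)) using 1
  ext x
  simp

theorem exists_countable_continuousMap_separating {X M : Type*} [TopologicalSpace X]
    [TopologicalSpace M] [MetrizableSpace M] [SeparableSpace M] (q : C(X, M)) :
    ∃ 𝓕 : Set C(X, ℝ), 𝓕.Countable ∧ ∀ x y, (∀ f ∈ 𝓕, f x = f y) → q x = q y := by
  let := metrizableSpaceMetric M
  obtain ⟨D, hD, hDdense⟩ := exists_countable_dense M
  let distTo (d : M) : C(X, ℝ) := ⟨fun x ↦ dist (q x) d, by fun_prop⟩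
  refine ⟨distTo '' D, hD.image distTo, fun x y h ↦ ?_⟩
  have dist_eq : dist (q x) = dist (q y) :=
    Continuous.ext_on hDdense (by fun_prop) (by fun_prop)
      fun d hd ↦ h (distTo d) (mem_image_of_mem _ hd)
  rw [eq_comm, ← dist_eq_zero, ← congrFun dist_eq, dist_self]

/-! ### Point-countable families of functions -/

/-- A family of real continuous functions is point-countable if at each point only countably many
of its members are nonzero. Evaluation at such a family maps into a `Σ`-product. -/
def PointCountable {X : Type*} [TopologicalSpace X] (𝓕 : Set C(X, ℝ)) : Prop :=
  ∀ x, {f ∈ 𝓕 | f x ≠ 0}.Countable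

/-- `T` admits a point-countable family of functions, defined on the whole space, that separates
the points of `T`. -/
def PointCountablySeparated {X : Type*} [TopologicalSpace X] (T : Set X) : Prop :=
  ∃ 𝓕 : Set C(X, ℝ), PointCountable 𝓕 ∧ ∀ x ∈ T, ∀ y ∈ T, (∀ f ∈ 𝓕, f x = f y) → x = y

section PointCountable

variable {X : Type*} [TopologicalSpace X]

theorem PointCountable.of_countable {𝓕 : Set C(X, ℝ)} (h : 𝓕.Countable) : PointCountable 𝓕 :=
  fun _ ↦ h.mono (sep_subset _ _)

theorem PointCountable.union {𝓕 𝓖 : Set C(X, ℝ)} (h𝓕 : PointCountable 𝓕)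
    (h𝓖 : PointCountable 𝓖) : PointCountable (𝓕 ∪ 𝓖) := by
  intro x
  refine ((h𝓕 x).union (h𝓖 x)).mono ?_
  rintro f ⟨hf𝓕 | hf𝓖, hfx⟩
  exacts [Or.inl ⟨hf𝓕, hfx⟩, Or.inr ⟨hf𝓖, hfx⟩]

theorem PointCountable.iUnion_sub_comp {W : Type*} {𝓕 : W → Set C(X, ℝ)}
    (h𝓕 : ∀ a, PointCountable (𝓕 a)) {p q : W → C(X, X)}
    (hpq : ∀ x, {a | p a x ≠ q a x}.Countable) :
    PointCountable (⋃ a, (fun f ↦ f.comp (p a) - f.comp (q a)) '' 𝓕 a) := by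
  intro x
  refine ((hpq x).biUnion fun a _ ↦ ((h𝓕 a (p a x)).union (h𝓕 a (q a x))).image
    fun f ↦ f.comp (p a) - f.comp (q a)).mono ?_
  rintro _ ⟨hf, hfx⟩
  obtain ⟨a, f, hfa, rfl⟩ := mem_iUnion.1 hf
  have hfx : f (p a x) ≠ f (q a x) := sub_ne_zero.1 hfx
  refine mem_biUnion (x := a) (fun heq ↦ hfx (by rw [heq])) ⟨f, ?_, rfl⟩
  by_cases h0 : f (p a x) = 0
  · exact Or.inr ⟨hfa, h0 ▸ hfx.symm⟩
  · exact Or.inl ⟨hfa, h0⟩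

theorem pointCountablySeparated_of_forall_fixed {M : Set X} [MetrizableSpace M] [SeparableSpace M]
    (q : C(X, M)) {T : Set X} (hq : ∀ x ∈ T, (q x : X) = x) : PointCountablySeparated T := by
  obtain ⟨𝓕, h𝓕, hsep⟩ := exists_countable_continuousMap_separating q
  refine ⟨𝓕, .of_countable h𝓕, fun x hx y hy h ↦ ?_⟩
  rw [← hq x hx, ← hq y hy, hsep x y h]

end PointCountable

section SigmaEmbedding

variable {K : Type u} [TopologicalSpace K] [CompactSpace K]

theorem isCorsonCompact_iff_exists_isEmbedding :
    IsCorsonCompact K ↔ ∃ (Γ : Type u) (φ : K → Γ → ℝ),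
      IsEmbedding φ ∧ ∀ x, (Function.support (φ x)).Countable := by
  constructor
  · rintro ⟨Γ, A, -, hA, ⟨e⟩⟩
    exact ⟨Γ, fun x ↦ e x, IsEmbedding.subtypeVal.comp e.isEmbedding, fun x ↦ hA _ (e x).2⟩
  · rintro ⟨Γ, φ, hφ, hsupp⟩
    exact ⟨Γ, range φ, isCompact_range hφ.continuous, forall_mem_range.2 hsupp,
      ⟨hφ.toHomeomorph⟩⟩

theorem PointCountablySeparated.isCorsonCompact (h : PointCountablySeparated (univ : Set K)) :
    IsCorsonCompact K := by
  obtain ⟨𝓕, h𝓕, hsep⟩ := h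
  let eval (x : K) (f : 𝓕) : ℝ := f.1 x
  have continuous_eval : Continuous eval := continuous_pi fun f ↦ f.1.continuous
  have eval_injective : Function.Injective eval := fun x y hxy ↦
    hsep x (mem_univ x) y (mem_univ y) fun f hf ↦ congrFun hxy ⟨f, hf⟩
  refine isCorsonCompact_iff_exists_isEmbedding.2
    ⟨𝓕, eval, (continuous_eval.isClosedEmbedding eval_injective).isEmbedding, fun x ↦ ?_⟩
  exact ((h𝓕 x).preimage Subtype.val_injective).mono
    fun f hf ↦ show f.1 ∈ {g ∈ 𝓕 | g x ≠ 0} from ⟨f.2, hf⟩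

end SigmaEmbedding

/-! ### The set induced by a skeleton -/

namespace RetractionalSkeleton

attribute [instance] RetractionalSkeleton.po RetractionalSkeleton.ne

variable {K : Type u} [TopologicalSpace K] (𝔰 : RetractionalSkeleton K)

instance isDirectedOrder_index : IsDirectedOrder 𝔰.Γ := ⟨𝔰.directed⟩

theorem mem_range_r {s : 𝔰.Γ} {x : K} : x ∈ range (𝔰.r s) ↔ 𝔰.r s x = x :=
  ⟨by rintro ⟨y, rfl⟩; exact 𝔰.isRetraction s y, fun h ↦ ⟨x, h⟩⟩

theorem monotone_range_r : Monotone fun s ↦ range (𝔰.r s) := by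
  rintro s t hst _ ⟨x, rfl⟩
  exact 𝔰.mem_range_r.2 (𝔰.comp_eq_of_le s t hst x).2

theorem isClosed_range_r [T2Space K] (s : 𝔰.Γ) : IsClosed (range (𝔰.r s)) := by
  convert isClosed_eq (𝔰.r s).continuous continuous_id using 1
  ext x
  exact 𝔰.mem_range_r

theorem secondCountableTopology_range_r [CompactSpace K] (s : 𝔰.Γ) :
    SecondCountableTopology (range (𝔰.r s)) := by
  have := 𝔰.metrizable s
  have := isCompact_iff_compactSpace.1 (isCompact_range (𝔰.r s).continuous)
  infer_instance

theorem dense_inducedSet : Dense 𝔰.inducedSet := fun x ↦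
  mem_closure_of_tendsto (𝔰.tendsto_id x)
    (Eventually.of_forall fun s ↦ mem_iUnion.2 ⟨s, mem_range_self x⟩)

/-- The axioms only speak of strictly increasing sequences; a weakly increasing one has a
subsequence that is strictly increasing or constant. -/
theorem exists_bound_tendsto_subseq {f : ℕ → 𝔰.Γ} (hf : Monotone f) :
    ∃ t, (∀ n, f n ≤ t) ∧ ∃ φ : ℕ → ℕ, StrictMono φ ∧
      ∀ x, Tendsto (fun n ↦ 𝔰.r (f (φ n)) x) atTop (𝓝 (𝔰.r t x)) := by
  obtain ⟨φ, hlt | hnlt⟩ := exists_increasing_or_nonincreasing_subseq (· < ·) f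
  · obtain ⟨t, ht, hlim⟩ := 𝔰.sup_seq (f ∘ φ) fun m n hmn ↦ hlt m n hmn
    exact ⟨t, fun n ↦ (hf (φ.strictMono.id_le n)).trans (ht.1 ⟨n, rfl⟩), φ, φ.strictMono, hlim⟩
  · have const (n : ℕ) : f (φ n) = f (φ 0) := by
      rcases n.eq_zero_or_pos with rfl | hn
      · rfl
      · exact (((hf (φ.monotone hn.le)).eq_or_lt).resolve_right (hnlt 0 n hn)).symm
    refine ⟨f (φ 0), fun n ↦ const n ▸ hf (φ.strictMono.id_le n), φ, φ.strictMono, fun x ↦ ?_⟩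
    simp only [const, tendsto_const_nhds]

theorem exists_bound_forall_eq [T2Space K] {f : ℕ → 𝔰.Γ} (hf : Monotone f) :
    ∃ t, (∀ n, f n ≤ t) ∧
      ∀ x y, (∀ n, 𝔰.r (f n) x = 𝔰.r (f n) y) → 𝔰.r t x = 𝔰.r t y := by
  obtain ⟨t, ht, φ, -, hlim⟩ := 𝔰.exists_bound_tendsto_subseq hf
  refine ⟨t, ht, fun x y h ↦ tendsto_nhds_unique (hlim x) ?_⟩
  simpa only [h] using hlim y

theorem bddAbove_of_countable_s11 {S : Set 𝔰.Γ} (hS : S.Countable) : BddAbove S := by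
  obtain ⟨g, hg, le_g⟩ := exists_monotone_finset_map 𝔰.Γ
  obtain ⟨E, hE, -, hcof⟩ := exists_monotone_finset_seq hS
  obtain ⟨t, ht, -⟩ := 𝔰.exists_bound_tendsto_subseq (hg.comp hE)
  refine ⟨t, fun s hs ↦ ?_⟩
  obtain ⟨n, hn⟩ := hcof {s} (by simpa using hs)
  exact (le_g s).trans ((hg hn).trans (ht n))

theorem exists_ge_subset_range_r (s : 𝔰.Γ) {C : Set K} (hC : C.Countable)
    (hCD : C ⊆ 𝔰.inducedSet) : ∃ t, s ≤ t ∧ C ⊆ range (𝔰.r t) := by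
  choose! σ hσ using fun x (hx : x ∈ C) ↦ mem_iUnion.1 (hCD hx)
  obtain ⟨t, ht⟩ := 𝔰.bddAbove_of_countable_s11 ((hC.image σ).insert s)
  exact ⟨t, ht (mem_insert _ _), fun x hx ↦
    𝔰.monotone_range_r (ht (mem_insert_of_mem _ (mem_image_of_mem σ hx))) (hσ x hx)⟩

/-- The set `C` and the sequence `f` are built together: `𝔰.r (f (n + 1))` fixes a countable subset
of `A` whose image under `𝔰.r (f n)` is dense in that of `A`. -/
theorem exists_countable_subset_forall_mem_closure_image [CompactSpace K] [T2Space K] {A : Set K}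
    (hA : A ⊆ 𝔰.inducedSet) (s : 𝔰.Γ) :
    ∃ C ⊆ A, C.Countable ∧ ∃ f : ℕ → 𝔰.Γ, Monotone f ∧ f 0 = s ∧
      (∀ n, 𝔰.r (f n) '' A ⊆ closure (𝔰.r (f n) '' C)) ∧
      ∀ t, (∀ n, f n ≤ t) → closure C ⊆ range (𝔰.r t) := by
  have := 𝔰.secondCountableTopology_range_r
  choose B hBA hB hBdense using fun s ↦ exists_countable_image_subset_closure (𝔰.r s) A
  choose next le_next hnext using fun s ↦
    𝔰.exists_ge_subset_range_r s (hB s) ((hBA s).trans hA)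
  let f (n : ℕ) : 𝔰.Γ := next^[n] s
  have f_succ (n : ℕ) : f (n + 1) = next (f n) := Function.iterate_succ_apply' next n s
  refine ⟨⋃ n, B (f n), iUnion_subset fun n ↦ hBA _, countable_iUnion fun n ↦ hB _, f,
    fun m n hmn ↦ Function.monotone_iterate_of_id_le le_next hmn s, rfl, fun n ↦ ?_,
    fun t ht ↦ ?_⟩
  · exact (hBdense _).trans (closure_mono (image_mono (subset_iUnion (fun n ↦ B (f n)) n)))
  · refine closure_minimal (iUnion_subset fun n ↦ (hnext _).trans ?_) (𝔰.isClosed_range_r t)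
    exact 𝔰.monotone_range_r (f_succ n ▸ ht (n + 1))

theorem exists_countable_mem_closure [CompactSpace K] [T2Space K] {A : Set K}
    (hA : A ⊆ 𝔰.inducedSet) {y : K} (hyD : y ∈ 𝔰.inducedSet) (hyA : y ∈ closure A) :
    ∃ C ⊆ A, C.Countable ∧ y ∈ closure C := by
  obtain ⟨s, hs⟩ := mem_iUnion.1 hyD
  obtain ⟨C, hCA, hC, f, hf, rfl, hdense, hrange⟩ :=
    𝔰.exists_countable_subset_forall_mem_closure_image hA s
  refine ⟨C, hCA, hC, ?_⟩
  obtain ⟨t, ht, hdet⟩ := 𝔰.exists_bound_forall_eq hf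
  have y_mem (n : ℕ) : 𝔰.r (f n) y ∈ closure (𝔰.r (f n) '' closure C) :=
    closure_minimal ((hdense n).trans (closure_mono (image_mono subset_closure))) isClosed_closure
      (image_closure_subset_closure_image (𝔰.r (f n)).continuous (mem_image_of_mem _ hyA))
  obtain ⟨z, hzC, hzy⟩ := exists_mem_forall_eq_of_mem_closure_image
    (fun n ↦ (𝔰.r (f n)).continuous) isClosed_closure.isCompact
    (fun m n hmn z hz ↦ by
      rw [← (𝔰.comp_eq_of_le _ _ (hf hmn) z).1, hz, (𝔰.comp_eq_of_le _ _ (hf hmn) y).1]) y_mem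
  have z_eq_y : z = y := by
    rw [← 𝔰.mem_range_r.1 (hrange t ht hzC), ← 𝔰.mem_range_r.1 (𝔰.monotone_range_r (ht 0) hs)]
    exact hdet z y hzy
  exact z_eq_y ▸ hzC

theorem countablyTight [CompactSpace K] [T2Space K] (h : 𝔰.inducedSet = univ) :
    CountablyTight K :=
  ⟨fun A y ↦ 𝔰.exists_countable_mem_closure (h ▸ subset_univ A) (h ▸ mem_univ y)⟩

theorem inducedSet_eq_univ [T2Space K] [CountablyTight K] : 𝔰.inducedSet = univ := by
  refine eq_univ_of_forall fun x ↦ ?_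
  obtain ⟨C, hCD, hC, hxC⟩ :=
    CountablyTight.exists_countable_mem_closure _ x (𝔰.dense_inducedSet x)
  obtain ⟨t, -, ht⟩ := 𝔰.exists_ge_subset_range_r (Classical.arbitrary _) hC hCD
  exact mem_iUnion.2 ⟨t, closure_minimal ht (𝔰.isClosed_range_r t) hxC⟩

end RetractionalSkeleton

/-! ### The skeleton of a Corson compact space -/

/-- The countable set `B` of coordinates is admissible for `φ : K → M ^ Γ` if setting the
coordinates outside `B` to zero maps the image of `φ` into itself. -/
def IsAdmissible {K Γ M : Type*} [Zero M] (φ : K → Γ → M) (B : Set Γ) : Prop :=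
  B.Countable ∧ ∀ x, B.indicator (φ x) ∈ range φ

namespace IsAdmissible

variable {K Γ M : Type*} [Zero M] [TopologicalSpace M] {φ : K → Γ → M}

theorem exists_superset_mem_closure_image_restrict [SecondCountableTopology M]
    (hsupp : ∀ x, (Function.support (φ x)).Countable) {B : Set Γ} (hB : B.Countable) :
    ∃ B' ⊇ B, B'.Countable ∧ ∀ x, B.domRestrict (φ x) ∈
      closure ((fun z ↦ B.domRestrict (φ z)) '' {z | Function.support (φ z) ⊆ B'}) := by
  have := hB.to_subtype
  obtain ⟨C, -, hC, hdense⟩ :=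
    exists_countable_image_subset_closure (fun z ↦ B.domRestrict (φ z)) univ
  refine ⟨B ∪ ⋃ z ∈ C, Function.support (φ z), subset_union_left,
    hB.union (hC.biUnion fun z _ ↦ hsupp z), fun x ↦ ?_⟩
  refine closure_mono (image_mono fun z hz ↦ ?_) (hdense (mem_image_of_mem _ (mem_univ x)))
  exact (subset_biUnion_of_mem (u := fun z ↦ Function.support (φ z)) hz).trans subset_union_right

variable [TopologicalSpace K]

theorem exists_superset [CompactSpace K] [T2Space M] [SecondCountableTopology M]
    (hφ : Continuous φ) (hsupp : ∀ x, (Function.support (φ x)).Countable) {B₀ : Set Γ}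
    (hB₀ : B₀.Countable) : ∃ B ⊇ B₀, IsAdmissible φ B := by
  have exists_next (B : {B : Set Γ // B.Countable}) :=
    exists_superset_mem_closure_image_restrict hsupp B.2
  choose next subset_next hnext hdense using exists_next
  let step (B : {B : Set Γ // B.Countable}) : {B : Set Γ // B.Countable} := ⟨next B, hnext B⟩
  let f (n : ℕ) : {B : Set Γ // B.Countable} := step^[n] ⟨B₀, hB₀⟩
  have hf : Monotone f := fun m n hmn ↦
    Function.monotone_iterate_of_id_le (f := step) subset_next hmn _
  have f_succ (n : ℕ) : (f (n + 1)).1 = next (f n) :=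
    congrArg Subtype.val (Function.iterate_succ_apply' step n _)
  let B : Set Γ := ⋃ n, (f n).1
  refine ⟨B, subset_iUnion (fun n ↦ (f n).1) 0, countable_iUnion fun n ↦ (f n).2, fun x ↦ ?_⟩
  have continuous_restrict (n : ℕ) : Continuous fun z ↦ (f n).1.domRestrict (φ z) :=
    continuous_pi fun γ ↦ (continuous_apply γ.1).comp hφ
  have isClosed_supported : IsClosed {z | Function.support (φ z) ⊆ B} := by
    simp only [Function.support_subset_iff', ofPred_forall]
    exact isClosed_iInter fun γ ↦ isClosed_iInter fun _ ↦
      isClosed_eq ((continuous_apply γ).comp hφ) continuous_const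
  obtain ⟨z, hzB, hzx⟩ := exists_mem_forall_eq_of_mem_closure_image (x := x)
    continuous_restrict isClosed_supported.isCompact
    (fun m n hmn z hz ↦ funext fun γ ↦ congrFun hz ⟨γ, hf hmn γ.2⟩)
    fun n ↦ closure_mono (image_mono fun z hz ↦ hz.trans
      (f_succ n ▸ subset_iUnion (fun n ↦ (f n).1) (n + 1))) (hdense (f n) x)
  refine ⟨z, ?_⟩
  rw [← indicator_eq_self.2 hzB]
  refine indicator_congr fun γ hγ ↦ ?_
  obtain ⟨n, hn⟩ := mem_iUnion.1 hγ
  exact congrFun (hzx n) ⟨γ, hn⟩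

theorem iUnion [CompactSpace K] [T2Space M] (hφ : Continuous φ) {f : ℕ → Set Γ} (hf : Monotone f)
    (h : ∀ n, IsAdmissible φ (f n)) : IsAdmissible φ (⋃ n, f n) := by
  refine ⟨countable_iUnion fun n ↦ (h n).1, fun x ↦ ?_⟩
  have hlim : Tendsto (fun n ↦ (f n).indicator (φ x)) atTop (𝓝 ((⋃ n, f n).indicator (φ x))) :=
    tendsto_pi_nhds.2 fun γ ↦ (hf.tendsto_indicator f (φ x) γ).trans (pure_le_nhds _)
  exact (isCompact_range hφ).isClosed.mem_of_tendsto hlim (Eventually.of_forall fun n ↦ (h n).2 x)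

/-- The retraction of `K` corresponding under the embedding `φ` to setting the coordinates outside
the admissible set `B` to zero. -/
noncomputable def truncation {B : Set Γ} (hB : IsAdmissible φ B) (hφ : IsEmbedding φ) :
    C(K, K) where
  toFun x := (hB.2 x).choose
  continuous_toFun := by
    classical
    rw [hφ.continuous_iff]
    refine continuous_pi fun γ ↦ ?_
    simp only [Function.comp_apply, (hB.2 _).choose_spec, indicator_apply]
    split_ifs
    · exact (continuous_apply γ).comp hφ.continuous
    · exact continuous_const

variable {B C : Set Γ} (hB : IsAdmissible φ B) (hC : IsAdmissible φ C) (hφ : IsEmbedding φ)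

theorem apply_truncation (x : K) : φ (hB.truncation hφ x) = B.indicator (φ x) :=
  (hB.2 x).choose_spec

theorem truncation_eq_self {x : K} (hx : Function.support (φ x) ⊆ B) : hB.truncation hφ x = x := by
  apply hφ.injective
  rw [hB.apply_truncation hφ, indicator_eq_self.2 hx]

theorem truncation_truncation (hBC : B ⊆ C) (x : K) :
    hB.truncation hφ (hC.truncation hφ x) = hB.truncation hφ x ∧
      hC.truncation hφ (hB.truncation hφ x) = hB.truncation hφ x := by
  constructor <;> apply hφ.injective <;> simp only [hB.apply_truncation hφ, hC.apply_truncation hφ,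
    indicator_indicator]
  · rw [inter_eq_left.2 hBC]
  · rw [inter_eq_right.2 hBC]

theorem metrizableSpace_range_truncation [CompactSpace K] [T3Space M]
    [SecondCountableTopology M] :
    MetrizableSpace (range (hB.truncation hφ)) := by
  have := hB.1.to_subtype
  have : MetrizableSpace (B → M) := metrizableSpace_of_t3_secondCountable _
  have := isCompact_iff_compactSpace.1 (isCompact_range (hB.truncation hφ).continuous)
  let coords (x : range (hB.truncation hφ)) : B → M := B.domRestrict (φ x)
  have continuous_coords : Continuous coords := continuous_pi fun b ↦
    (continuous_apply b.1).comp (hφ.continuous.comp continuous_subtype_val)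
  refine (continuous_coords.isClosedEmbedding ?_).isEmbedding.metrizableSpace
  rintro ⟨_, x, rfl⟩ ⟨_, y, rfl⟩ hxy
  have eq_on_B (γ : Γ) (hγ : γ ∈ B) : B.indicator (φ x) γ = B.indicator (φ y) γ := by
    simpa only [coords, domRestrict_apply, hB.apply_truncation hφ] using congrFun hxy ⟨γ, hγ⟩
  refine Subtype.ext (hφ.injective (funext fun γ ↦ ?_))
  simp only [hB.apply_truncation hφ]
  by_cases hγ : γ ∈ B
  · exact eq_on_B γ hγ
  · simp only [indicator_of_notMem hγ]

theorem tendsto_truncation {f : ℕ → Set Γ} (hf : Monotone f) (h : ∀ n, IsAdmissible φ (f n))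
    (hU : IsAdmissible φ (⋃ n, f n)) (x : K) :
    Tendsto (fun n ↦ (h n).truncation hφ x) atTop (𝓝 (hU.truncation hφ x)) := by
  rw [hφ.tendsto_nhds_iff, tendsto_pi_nhds]
  intro γ
  simp only [Function.comp_apply, (h _).apply_truncation hφ, hU.apply_truncation hφ]
  exact (hf.tendsto_indicator f (φ x) γ).trans (pure_le_nhds _)

end IsAdmissible

section TruncationSkeleton

variable {K Γ : Type u} {M : Type*} [TopologicalSpace K] [CompactSpace K] [Zero M]
  [TopologicalSpace M] [T3Space M] [SecondCountableTopology M] {φ : K → Γ → M}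

/-- The skeleton formed by the truncations to the admissible sets of coordinates. -/
noncomputable def truncationSkeleton (hφ : IsEmbedding φ)
    (hsupp : ∀ x, (Function.support (φ x)).Countable) : RetractionalSkeleton K where
  Γ := {B : Set Γ // IsAdmissible φ B}
  ne :=
    let ⟨B, _, hB⟩ := IsAdmissible.exists_superset hφ.continuous hsupp countable_empty
    ⟨⟨B, hB⟩⟩
  directed s t := by
    obtain ⟨B, hB, hBa⟩ :=
      IsAdmissible.exists_superset hφ.continuous hsupp (s.2.1.union t.2.1)
    exact ⟨⟨B, hBa⟩, subset_union_left.trans hB, subset_union_right.trans hB⟩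
  r s := s.2.truncation hφ
  isRetraction s x := (s.2.truncation_truncation s.2 hφ Subset.rfl x).1
  metrizable s := s.2.metrizableSpace_range_truncation hφ
  tendsto_id x := by
    obtain ⟨B, hB, hBa⟩ := IsAdmissible.exists_superset hφ.continuous hsupp (hsupp x)
    refine tendsto_const_nhds.congr' ((eventually_ge_atTop ⟨B, hBa⟩).mono fun s hs ↦ ?_)
    exact (s.2.truncation_eq_self hφ (hB.trans hs)).symm
  comp_eq_of_le s t hst := s.2.truncation_truncation t.2 hφ hst
  sup_seq f hf := by
    have hmono : Monotone fun n ↦ (f n).1 := fun m n hmn ↦ hf.monotone hmn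
    have hU := IsAdmissible.iUnion hφ.continuous hmono fun n ↦ (f n).2
    refine ⟨⟨⋃ n, (f n).1, hU⟩, ⟨?_, fun B hB ↦ iUnion_subset fun n ↦ hB ⟨n, rfl⟩⟩,
      IsAdmissible.tendsto_truncation hφ hmono (fun n ↦ (f n).2) hU⟩
    rintro _ ⟨n, rfl⟩
    exact subset_iUnion (fun n ↦ (f n).1) n

theorem inducedSet_truncationSkeleton (hφ : IsEmbedding φ)
    (hsupp : ∀ x, (Function.support (φ x)).Countable) :
    (truncationSkeleton hφ hsupp).inducedSet = univ := by
  refine eq_univ_of_forall fun x ↦ mem_iUnion.2 ?_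
  obtain ⟨B, hB, hBa⟩ := IsAdmissible.exists_superset hφ.continuous hsupp (hsupp x)
  exact ⟨⟨B, hBa⟩, x, hBa.truncation_eq_self hφ hB⟩

end TruncationSkeleton

theorem IsCorsonCompact.exists_inducedSet_eq_univ {K : Type u} [TopologicalSpace K]
    [CompactSpace K] (hK : IsCorsonCompact K) :
    ∃ 𝔰 : RetractionalSkeleton K, 𝔰.inducedSet = univ := by
  obtain ⟨Γ, φ, hφ, hsupp⟩ := isCorsonCompact_iff_exists_isEmbedding.1 hK
  exact ⟨truncationSkeleton hφ hsupp, inducedSet_truncationSkeleton hφ hsupp⟩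

/-! ### Retractions indexed by finite sets -/

/-- A compatible family of retractions with metrizable ranges, indexed by the finite subsets of a
set `I`. The last axiom keeps what is needed of the countable suprema of a retractional skeleton:
for countable `C`, some map `q` fixes the ranges of all `proj F` with `F ⊆ C` and is determined by
these `proj F`. -/
structure RetractionSystem (I : Type v) (K : Type u) [TopologicalSpace K] where
  proj : Finset I → C(K, K)
  metrizable : ∀ F, MetrizableSpace (range (proj F))
  proj_proj_of_subset : ∀ {F G : Finset I}, F ⊆ G → ∀ x, proj F (proj G x) = proj F x
  proj_proj_of_superset : ∀ {F G : Finset I}, F ⊆ G → ∀ x, proj G (proj F x) = proj F x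
  exists_limit : ∀ C : Set I, C.Countable → ∃ q : C(K, K),
    (∀ F : Finset I, (F : Set I) ⊆ C → ∀ x, q (proj F x) = proj F x) ∧
    ∀ x y, (∀ F : Finset I, (F : Set I) ⊆ C → proj F x = proj F y) → q x = q y

namespace RetractionSystem

variable {I : Type v} {K : Type u} [TopologicalSpace K] (𝔭 : RetractionSystem I K)

/-- The closed set generated by a set `S` of indices, onto which `retraction` projects. -/
def hull (S : Set I) : Set K :=
  closure (⋃ F : {F : Finset I // (F : Set I) ⊆ S}, range (𝔭.proj F))

theorem isClosed_hull (S : Set I) : IsClosed (𝔭.hull S) := isClosed_closure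

variable {𝔭}

theorem proj_mem_hull {S : Set I} {F : Finset I} (hF : (F : Set I) ⊆ S) (x : K) :
    𝔭.proj F x ∈ 𝔭.hull S :=
  subset_closure (mem_iUnion.2 ⟨⟨F, hF⟩, mem_range_self x⟩)

theorem hull_minimal {S : Set I} {Z : Set K} (hZ : IsClosed Z)
    (h : ∀ F : Finset I, (F : Set I) ⊆ S → ∀ x, 𝔭.proj F x ∈ Z) : 𝔭.hull S ⊆ Z :=
  closure_minimal (iUnion_subset fun F ↦ range_subset_iff.2 (h F.1 F.2)) hZ

variable (𝔭) in
theorem hull_mono : Monotone 𝔭.hull := fun _ T hST ↦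
  hull_minimal (𝔭.isClosed_hull T) fun _ hF ↦ proj_mem_hull (hF.trans hST)

theorem proj_eq_self_of_mem_hull [T2Space K] {F : Finset I} {x : K} (hx : x ∈ 𝔭.hull F) :
    𝔭.proj F x = x :=
  hull_minimal (isClosed_eq (𝔭.proj F).continuous continuous_id)
    (fun _ hG ↦ 𝔭.proj_proj_of_superset (Finset.coe_subset.1 hG)) hx

theorem exists_countable_mem_hull [CountablyTight K] {S : Set I} {x : K} (hx : x ∈ 𝔭.hull S) :
    ∃ C ⊆ S, C.Countable ∧ x ∈ 𝔭.hull C := by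
  obtain ⟨D, hDS, hD, hxD⟩ := CountablyTight.exists_countable_mem_closure _ x hx
  choose F hF using fun d : D ↦ mem_iUnion.1 (hDS d.2)
  have := hD.to_subtype
  refine ⟨⋃ d, (F d : Set I), iUnion_subset fun d ↦ (F d).2,
    countable_iUnion fun d ↦ (F d).1.countable_toSet, ?_⟩
  refine closure_minimal (fun d hd ↦ ?_) (𝔭.isClosed_hull _) hxD
  have F_subset : ((F ⟨d, hd⟩).1 : Set I) ⊆ ⋃ d, ((F d).1 : Set I) :=
    subset_iUnion (fun d ↦ ((F d).1 : Set I)) ⟨d, hd⟩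
  exact range_subset_iff.2 (proj_mem_hull F_subset) (hF ⟨d, hd⟩)

theorem eq_of_forall_proj_eq [T2Space K] [CountablyTight K] {S : Set I} {x y : K}
    (hx : x ∈ 𝔭.hull S) (hy : y ∈ 𝔭.hull S)
    (h : ∀ F : Finset I, (F : Set I) ⊆ S → 𝔭.proj F x = 𝔭.proj F y) : x = y := by
  obtain ⟨C, hCS, hC, hxC⟩ := exists_countable_mem_hull hx
  obtain ⟨D, hDS, hD, hyD⟩ := exists_countable_mem_hull hy
  obtain ⟨q, hqfix, hq⟩ := 𝔭.exists_limit _ (hC.union hD)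
  have q_eq_self : 𝔭.hull (C ∪ D) ⊆ {z | q z = z} :=
    hull_minimal (isClosed_eq q.continuous continuous_id) hqfix
  calc x = q x := (q_eq_self (𝔭.hull_mono subset_union_left hxC)).symm
    _ = q y := hq x y fun F hF ↦ h F (hF.trans (union_subset hCS hDS))
    _ = y := q_eq_self (𝔭.hull_mono subset_union_right hyD)

theorem exists_mem_hull_forall_proj_eq [CompactSpace K] [T2Space K] (S : Set I) (x : K) :
    ∃ y ∈ 𝔭.hull S, ∀ F : Finset I, (F : Set I) ⊆ S → 𝔭.proj F y = 𝔭.proj F x := by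
  obtain ⟨y, hy, h⟩ := exists_mem_forall_eq_of_mem_closure_image (x := x) (S := 𝔭.hull S)
    (f := fun (F : {F : Finset I // (F : Set I) ⊆ S}) z ↦ 𝔭.proj F z)
    (fun F ↦ (𝔭.proj F).continuous) (𝔭.isClosed_hull S).isCompact
    (fun F G hFG z hz ↦ by
      rw [← 𝔭.proj_proj_of_subset hFG, hz, 𝔭.proj_proj_of_subset hFG])
    fun F ↦ subset_closure
      ⟨𝔭.proj F x, proj_mem_hull F.2 x, 𝔭.proj_proj_of_subset Subset.rfl x⟩
  exact ⟨y, hy, fun F hF ↦ h ⟨F, hF⟩⟩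

theorem pointCountablySeparated_hull_of_finite [CompactSpace K] [T2Space K] {S : Set I}
    (hS : S.Finite) : PointCountablySeparated (𝔭.hull S) := by
  lift S to Finset I using hS
  have := 𝔭.metrizable S
  have := isCompact_iff_compactSpace.1 (isCompact_range (𝔭.proj S).continuous)
  exact pointCountablySeparated_of_forall_fixed
    ⟨rangeFactorization (𝔭.proj S), (𝔭.proj S).continuous.subtype_mk _⟩
    fun x hx ↦ proj_eq_self_of_mem_hull hx

section Retraction

variable [CompactSpace K] [T2Space K] [CountablyTight K]

theorem continuous_of_forall_proj_eq {S : Set I} {R : K → K} (hR : ∀ x, R x ∈ 𝔭.hull S)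
    (hproj : ∀ x, ∀ F : Finset I, (F : Set I) ⊆ S → 𝔭.proj F (R x) = 𝔭.proj F x) :
    Continuous R := by
  have graph_eq : {p : K × K | R p.1 = p.2} = Prod.snd ⁻¹' 𝔭.hull S ∩
      ⋂ F : {F : Finset I // (F : Set I) ⊆ S}, {p | 𝔭.proj F p.2 = 𝔭.proj F p.1} := by
    ext ⟨x, y⟩
    simp only [mem_inter_iff, mem_preimage, mem_iInter, mem_ofPred_eq, Subtype.forall]
    refine ⟨fun h ↦ h ▸ ⟨hR x, hproj x⟩, fun ⟨hy, h⟩ ↦ eq_of_forall_proj_eq (hR x) hy fun F hF ↦ ?_⟩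
    exact (hproj x F hF).trans (h F hF).symm
  refine continuous_of_isClosed_graph (graph_eq ▸ ?_)
  exact ((𝔭.isClosed_hull S).preimage continuous_snd).inter <| isClosed_iInter fun F ↦
    isClosed_eq ((𝔭.proj F).continuous.comp continuous_snd)
      ((𝔭.proj F).continuous.comp continuous_fst)

variable (𝔭) in
/-- The retraction onto `hull S`, characterised by `proj F (retraction S x) = proj F x` for finite
`F ⊆ S`. -/
noncomputable def retraction (S : Set I) : C(K, K) where
  toFun x := (exists_mem_hull_forall_proj_eq (𝔭 := 𝔭) S x).choose
  continuous_toFun := continuous_of_forall_proj_eq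
    (fun x ↦ (exists_mem_hull_forall_proj_eq S x).choose_spec.1)
    fun x ↦ (exists_mem_hull_forall_proj_eq S x).choose_spec.2

theorem retraction_mem_hull (S : Set I) (x : K) : 𝔭.retraction S x ∈ 𝔭.hull S :=
  (exists_mem_hull_forall_proj_eq S x).choose_spec.1

theorem proj_retraction {S : Set I} {F : Finset I} (hF : (F : Set I) ⊆ S) (x : K) :
    𝔭.proj F (𝔭.retraction S x) = 𝔭.proj F x :=
  (exists_mem_hull_forall_proj_eq S x).choose_spec.2 F hF

theorem retraction_eq_iff {S : Set I} {x y : K} (hy : y ∈ 𝔭.hull S) :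
    𝔭.retraction S x = y ↔ ∀ F : Finset I, (F : Set I) ⊆ S → 𝔭.proj F x = 𝔭.proj F y := by
  refine ⟨?_, fun h ↦ eq_of_forall_proj_eq (retraction_mem_hull S x) hy fun F hF ↦ ?_⟩
  · rintro rfl F hF
    exact (proj_retraction hF x).symm
  · rw [proj_retraction hF, h F hF]

theorem retraction_eq_retraction_iff {S : Set I} {x y : K} :
    𝔭.retraction S x = 𝔭.retraction S y ↔
      ∀ F : Finset I, (F : Set I) ⊆ S → 𝔭.proj F x = 𝔭.proj F y := by
  rw [retraction_eq_iff (retraction_mem_hull S y)]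
  exact forall₂_congr fun F hF ↦ by rw [proj_retraction hF]

theorem retraction_eq_self {S : Set I} {x : K} (hx : x ∈ 𝔭.hull S) : 𝔭.retraction S x = x :=
  (retraction_eq_iff hx).2 fun _ _ ↦ rfl

theorem retraction_retraction {S T : Set I} (hST : S ⊆ T) (x : K) :
    𝔭.retraction S (𝔭.retraction T x) = 𝔭.retraction S x :=
  retraction_eq_retraction_iff.2 fun _ hF ↦ proj_retraction (hF.trans hST) x

variable (𝔭) in
theorem exists_countable_retraction_eq (S : Set I) (x : K) :
    ∃ C ⊆ S, C.Countable ∧ ∀ T, C ⊆ T → T ⊆ S → 𝔭.retraction T x = 𝔭.retraction S x := by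
  obtain ⟨C, hCS, hC, hxC⟩ := exists_countable_mem_hull (𝔭.retraction_mem_hull S x)
  refine ⟨C, hCS, hC, fun T hCT hTS ↦ ?_⟩
  rw [← retraction_retraction hTS, retraction_eq_self (𝔭.hull_mono hCT hxC)]

section WellOrder

variable {W : Type*} [LinearOrder W] {i : W → I}

variable (𝔭) in
theorem countable_setOf_retraction_ne [WellFoundedLT W] (hi : Function.Injective i) (x : K) :
    {a | 𝔭.retraction (i '' Iic a) x ≠ 𝔭.retraction (i '' Iio a) x}.Countable := by
  refine countable_of_isLowerSet_cofinal fun J hJ ↦ ?_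
  obtain ⟨D, hDJ, hD, hstable⟩ := 𝔭.exists_countable_retraction_eq (i '' J) x
  obtain ⟨C, hCJ, rfl⟩ := subset_image_iff.1 hDJ
  refine ⟨C, hCJ, countable_of_injective_of_countable_image hi.injOn hD, ?_⟩
  rintro b ⟨hb, hbJ⟩
  by_contra! hlt
  apply hb
  have Iic_subset : Iic b ⊆ J := hJ.Iic_subset hbJ
  rw [hstable (i '' Iic b) (image_mono fun c hc ↦ (hlt c hc).le) (image_mono Iic_subset),
    hstable (i '' Iio b) (image_mono hlt) (image_mono (Iio_subset_Iic_self.trans Iic_subset))]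

/-- For nonempty `F ⊆ i '' J`, `proj F` factors through the stage of the largest element
of `F`. -/
theorem proj_eq_of_retraction_Iic_eq {x y : K} {J : Set W} (hempty : 𝔭.proj ∅ x = 𝔭.proj ∅ y)
    (hJ : ∀ b ∈ J, 𝔭.retraction (i '' Iic b) x = 𝔭.retraction (i '' Iic b) y) {F : Finset I}
    (hF : (F : Set I) ⊆ i '' J) : 𝔭.proj F x = 𝔭.proj F y := by
  classical
  obtain ⟨F, hFJ, rfl⟩ := Finset.subset_set_image_iff.1 hF
  rcases F.eq_empty_or_nonempty with rfl | hne
  · simpa using hempty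
  · have hmax : ((F.image i : Finset I) : Set I) ⊆ i '' Iic (F.max' hne) := by
      rw [Finset.coe_image]
      exact image_mono fun b hb ↦ F.le_max' b hb
    exact retraction_eq_retraction_iff.1 (hJ _ (hFJ (F.max'_mem hne))) _ hmax

/-- By induction on the stage: the stages below `a` determine `retraction (i '' Iio a)`, and the
differences at stage `a` then determine `f ∘ retraction (i '' Iic a)`. -/
theorem retraction_Iic_eq_of_sub_eq [WellFoundedLT W] {𝓕 : W → Set C(K, ℝ)}
    (hsep : ∀ a, ∀ x ∈ 𝔭.hull (i '' Iic a), ∀ y ∈ 𝔭.hull (i '' Iic a),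
      (∀ f ∈ 𝓕 a, f x = f y) → x = y)
    {x y : K} (hempty : 𝔭.proj ∅ x = 𝔭.proj ∅ y)
    (hsub : ∀ a, ∀ f ∈ 𝓕 a,
      f (𝔭.retraction (i '' Iic a) x) - f (𝔭.retraction (i '' Iio a) x) =
        f (𝔭.retraction (i '' Iic a) y) - f (𝔭.retraction (i '' Iio a) y)) (a : W) :
    𝔭.retraction (i '' Iic a) x = 𝔭.retraction (i '' Iic a) y := by
  induction a using WellFoundedLT.induction with
  | ind a ih =>
    have hlt : 𝔭.retraction (i '' Iio a) x = 𝔭.retraction (i '' Iio a) y :=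
      retraction_eq_retraction_iff.2 fun F ↦ proj_eq_of_retraction_Iic_eq hempty ih
    refine hsep a _ (retraction_mem_hull _ x) _ (retraction_mem_hull _ y) fun f hf ↦ ?_
    exact sub_left_injective (hlt ▸ hsub a f hf)

theorem pointCountablySeparated_hull_range [WellFoundedLT W] (hi : Function.Injective i)
    (ih : ∀ a, PointCountablySeparated (𝔭.hull (i '' Iic a))) :
    PointCountablySeparated (𝔭.hull (range i)) := by
  have := 𝔭.metrizable ∅
  have := isCompact_iff_compactSpace.1 (isCompact_range (𝔭.proj ∅).continuous)
  obtain ⟨𝓕₀, h𝓕₀, hsep₀⟩ := exists_countable_continuousMap_separating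
    (⟨rangeFactorization (𝔭.proj ∅), (𝔭.proj ∅).continuous.subtype_mk _⟩ : C(K, _))
  choose 𝓕 h𝓕 hsep using ih
  refine ⟨_, (PointCountable.of_countable h𝓕₀).union
    (PointCountable.iUnion_sub_comp h𝓕 (𝔭.countable_setOf_retraction_ne hi)),
    fun x hx y hy h ↦ eq_of_forall_proj_eq hx hy fun F hF ↦ ?_⟩
  have hempty : 𝔭.proj ∅ x = 𝔭.proj ∅ y :=
    congrArg Subtype.val (hsep₀ x y fun f hf ↦ h f (Or.inl hf))
  refine proj_eq_of_retraction_Iic_eq (J := univ) hempty (fun a _ ↦ ?_) (by rwa [image_univ])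
  exact retraction_Iic_eq_of_sub_eq hsep hempty
    (fun a f hf ↦ h _ (Or.inr (mem_iUnion.2 ⟨a, mem_image_of_mem _ hf⟩))) a

end WellOrder

variable (𝔭) in
theorem pointCountablySeparated_hull (S : Set I) : PointCountablySeparated (𝔭.hull S) :=
  set_induction_wellOrder (fun _ ↦ pointCountablySeparated_hull_of_finite)
    (fun _ _ _ _ hi ↦ pointCountablySeparated_hull_range hi) S

end Retraction

end RetractionSystem

namespace RetractionalSkeleton

variable {K : Type u} [TopologicalSpace K] [T2Space K] (𝔰 : RetractionalSkeleton K)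

/-- The reindexing of a skeleton by finite sets along a monotone map. -/
def retractionSystem {g : Finset 𝔰.Γ → 𝔰.Γ} (hg : Monotone g) : RetractionSystem 𝔰.Γ K where
  proj F := 𝔰.r (g F)
  metrizable F := 𝔰.metrizable (g F)
  proj_proj_of_subset hFG x := (𝔰.comp_eq_of_le _ _ (hg hFG) x).1
  proj_proj_of_superset hFG x := (𝔰.comp_eq_of_le _ _ (hg hFG) x).2
  exists_limit C hC := by
    obtain ⟨E, hE, hEC, hcof⟩ := exists_monotone_finset_seq hC
    obtain ⟨t, ht, hdet⟩ := 𝔰.exists_bound_forall_eq (hg.comp hE)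
    refine ⟨𝔰.r t, fun F hF x ↦ ?_, fun x y h ↦ hdet x y fun n ↦ h _ (hEC n)⟩
    obtain ⟨n, hn⟩ := hcof F hF
    exact (𝔰.comp_eq_of_le _ _ ((hg hn).trans (ht n)) x).2

theorem hull_univ_retractionSystem {g : Finset 𝔰.Γ → 𝔰.Γ} (hg : Monotone g)
    (le_g : ∀ s, s ≤ g {s}) : (𝔰.retractionSystem hg).hull univ = univ := by
  refine eq_univ_of_univ_subset (𝔰.dense_inducedSet.closure_eq ▸
    closure_minimal (iUnion_subset fun s ↦ ?_) ((𝔰.retractionSystem hg).isClosed_hull univ))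
  refine (𝔰.monotone_range_r (le_g s)).trans (range_subset_iff.2 ?_)
  exact RetractionSystem.proj_mem_hull (𝔭 := 𝔰.retractionSystem hg) (subset_univ _)

theorem isCorsonCompact [CompactSpace K] [CountablyTight K] (𝔰 : RetractionalSkeleton K) :
    IsCorsonCompact K := by
  obtain ⟨g, hg, le_g⟩ := exists_monotone_finset_map 𝔰.Γ
  refine PointCountablySeparated.isCorsonCompact ?_
  rw [← 𝔰.hull_univ_retractionSystem hg le_g]
  exact (𝔰.retractionSystem hg).pointCountablySeparated_hull univ

end RetractionalSkeleton

/-- A compact Hausdorff space `K` is Corson compact if and only if `K` itself is induced by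
an r-skeleton in `K`; moreover if `K` is Corson compact then every set induced by an
r-skeleton in `K` equals `K`. -/
theorem corson_iff_univ_inducedByRSkeleton (K : Type u) [TopologicalSpace K] [CompactSpace K]
    [T2Space K] :
    (IsCorsonCompact K ↔ IsInducedByRSkeleton (Set.univ : Set K)) ∧
      (IsCorsonCompact K → ∀ D : Set K, IsInducedByRSkeleton D → D = Set.univ) := by
  refine ⟨⟨IsCorsonCompact.exists_inducedSet_eq_univ, ?_⟩, ?_⟩
  · rintro ⟨𝔰, h𝔰⟩
    have : CountablyTight K := 𝔰.countablyTight h𝔰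
    exact 𝔰.isCorsonCompact
  · rintro hK _ ⟨𝔰, rfl⟩
    obtain ⟨𝔱, h𝔱⟩ := hK.exists_inducedSet_eq_univ
    have : CountablyTight K := 𝔱.countablyTight h𝔱
    exact 𝔰.inducedSet_eq_univ
end
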